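/- arXiv:2602.22089 — 2 statements merged into one kernel-verified Lean document; each statement's English description precedes it below -/
import Mathlib

section
/- A hereditary class of cographs has bounded linear clique-width if and only if it contains neither all quasi-threshold graphs nor the complements of all quasi-threshold graphs. -/
/-!
The vertices of a linear clique-width expression arrive one at a time, and the expression
is cheap when the graph is assembled by repeatedly adding a part that is one label
cheaper. Both directions are governed by this.

*Upper bound.* A cograph on at least two vertices is a disjoint union or a join
(`P4Free.splits`). If `A` needs `k + 1` labels and `B` needs `k`, then their union or join needs
`k + 1`: `A` is built first and parked under one label while `B` is built (`Rk.build`). So the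
rank `Rk` of such a decomposition bounds linear clique-width. Every quasi-threshold
graph embeds into some `QGraph s` (`IsQT.exists_embedding`), so a hereditary class missing a
quasi-threshold graph and a complement of one excludes some `QGraph s` and the complement of
some `QGraph t`. The rank of a cograph excluding both is at most `2 * (s + t)`
(`P4Free.rk_of_not_has`), by induction on `s + t` and on the number of vertices. If the cograph is
disconnected, a component `A` and the rest `B` either have one member of rank at most
`2 * (s + t) - 1`, and then the decomposition combines, or both contain `QGraph (s - 1)`; since `A`
is itself a join, one of its sides contains `QGraph (s - 1)` too, and a vertex of the other
side dominates it, which gives `QGraph s` (`Splits.rk_of_not_has`). The connected case is the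
same in the complement.

*Lower bound.* With `k` labels, at each moment the vertices present have at most `k` distinct
neighbourhoods (traces) among the vertices still to come. Starting from `K₂` and
repeatedly replacing `H` by a dominating vertex over three disjoint copies of `H` gives
quasi-threshold graphs in which every vertex order has a cut with arbitrarily many distinct
nonempty traces (`ManyTraces.triple`). Complementation preserves distinctness of traces, so
the complements need many labels as well (`ManyTraces.not_lcwLE`).
-/

open scoped Classical

/-! ### Linear clique-width -/

/-- A configuration reached while building a graph by a linear clique-width expression:
the set of vertices introduced so far, the adjacency relation created so far, and the
current labeling of the vertices by labels from `Fin k`. -/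
structure LCWConfig (V : Type) (k : ℕ) where
  verts : Set V
  adj : V → V → Prop
  lab : V → Fin k

/-- A single operation of a linear clique-width expression with `k` labels:
introduce a new vertex with some label, join all vertices labeled `i` to all vertices
labeled `j` (for `i ≠ j`), or relabel every vertex labeled `i` to `j` (for `i ≠ j`). -/
inductive LCWStep {V : Type} {k : ℕ} : LCWConfig V k → LCWConfig V k → Prop
  | intro (C : LCWConfig V k) (v : V) (hv : v ∉ C.verts) (c : Fin k) :
      LCWStep C ⟨insert v C.verts, C.adj, fun x => if x = v then c else C.lab x⟩
  | join (C : LCWConfig V k) (i j : Fin k) (hij : i ≠ j) :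
      LCWStep C ⟨C.verts, fun x y => C.adj x y ∨
        (x ∈ C.verts ∧ y ∈ C.verts ∧
          ((C.lab x = i ∧ C.lab y = j) ∨ (C.lab x = j ∧ C.lab y = i))), C.lab⟩
  | relabel (C : LCWConfig V k) (i j : Fin k) (hij : i ≠ j) :
      LCWStep C ⟨C.verts, C.adj, fun x => if C.lab x = i then j else C.lab x⟩

/-- `lcwLE G k` means that the graph `G` can be constructed by a linear clique-width
expression using (at most) `k` labels. -/
def lcwLE {V : Type} (G : SimpleGraph V) (k : ℕ) : Prop :=
  ∃ ℓ₀ ℓ : V → Fin k,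
    Relation.ReflTransGen LCWStep
      (⟨∅, fun _ _ => False, ℓ₀⟩ : LCWConfig V k) ⟨Set.univ, G.Adj, ℓ⟩

/-- The linear clique-width of a graph `G`: the least number of labels needed to
construct `G` by a linear clique-width expression. -/
noncomputable def lcw {V : Type} (G : SimpleGraph V) : ℕ :=
  sInf {k | lcwLE G k}

/-! ### Modules, prime graphs, inflations -/

/-- A module of a graph: every vertex outside `M` is adjacent to all of `M` or to none of it. -/
def IsModule {V : Type} (G : SimpleGraph V) (M : Set V) : Prop :=
  ∀ u ∈ M, ∀ v ∈ M, ∀ w ∉ M, (G.Adj w u ↔ G.Adj w v)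

/-- A graph on at least two vertices is prime if all of its modules are trivial
(empty, singletons, or the whole vertex set). -/
def IsPrime {V : Type} (G : SimpleGraph V) : Prop :=
  2 ≤ Nat.card V ∧ ∀ M : Set V, IsModule G M → M.Subsingleton ∨ M = Set.univ

/-- `IsInflation G H φ` says that `G` is an inflation of `H`, where `φ` maps each vertex of
`G` to the vertex of `H` whose module (namely the induced subgraph of `G` on the fiber
`φ ⁻¹ {v}`) contains it: fibers are nonempty, and for vertices in distinct fibers,
adjacency in `G` is equivalent to adjacency of the fibers' images in `H`. -/
def IsInflation {V ι : Type} (G : SimpleGraph V) (H : SimpleGraph ι) (φ : V → ι) : Prop :=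
  Function.Surjective φ ∧
    ∀ x y : V, φ x ≠ φ y → (G.Adj x y ↔ H.Adj (φ x) (φ y))

/-! ### Join, quasi-threshold graphs, universal quasi-threshold graphs -/

/-- The join of two graphs: their disjoint union together with all edges between the parts. -/
def GJoin {α β : Type} (G : SimpleGraph α) (H : SimpleGraph β) : SimpleGraph (α ⊕ β) :=
  (Gᶜ ⊕g Hᶜ)ᶜ

/-- Quasi-threshold graphs: those constructible (up to isomorphism) from `K₁` by repeatedly
taking joins with `K₁` and disjoint unions with other quasi-threshold graphs. -/
inductive IsQT : ∀ {V : Type}, SimpleGraph V → Prop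
  | single : IsQT (⊥ : SimpleGraph (Fin 1))
  | joinK1 {V : Type} {G : SimpleGraph V} :
      IsQT G → IsQT (GJoin (⊥ : SimpleGraph (Fin 1)) G)
  | union {V W : Type} {G : SimpleGraph V} {H : SimpleGraph W} :
      IsQT G → IsQT H → IsQT (G ⊕g H)
  | iso {V W : Type} {G : SimpleGraph V} {H : SimpleGraph W} :
      IsQT G → Nonempty (G ≃g H) → IsQT H

/-- Vertex set of the universal quasi-threshold graph `Q_{n+1}`. -/
def QVert : ℕ → Type
  | 0 => Fin 1
  | n + 1 => ((Fin 1) ⊕ QVert n) ⊕ QVert n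

/-- The universal quasi-threshold graphs, indexed so that `QGraph (t - 1)` is `Q_t`:
`Q_1 = K_1` and `Q_{t} = (K_1 ∗ Q_{t-1}) ⊎ Q_{t-1}` for `t ≥ 2`. -/
def QGraph : (n : ℕ) → SimpleGraph (QVert n)
  | 0 => ⊥
  | n + 1 => (GJoin (⊥ : SimpleGraph (Fin 1)) (QGraph n)) ⊕g (QGraph n)

/-! ### Hereditary classes of graphs -/

/-- A hereditary class of finite graphs, represented by the set of its members on the
vertex sets `Fin n`: it is closed under isomorphism and induced subgraphs, which together
amount to closure under induced-subgraph embeddings. -/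
def Hereditary (C : ∀ n : ℕ, Set (SimpleGraph (Fin n))) : Prop :=
  ∀ {m n : ℕ} (H : SimpleGraph (Fin m)) (G : SimpleGraph (Fin n)),
    Nonempty (H ↪g G) → G ∈ C n → H ∈ C m

/-! ### Cographs: splitting into a disjoint union or a join -/

/-- Elementary form of `P₄`-freeness; the vertices are automatically distinct. -/
def P4Free {V : Type} (G : SimpleGraph V) : Prop :=
  ∀ a b c d, G.Adj a b → G.Adj b c → G.Adj c d →
    ¬ G.Adj a c → ¬ G.Adj b d → ¬ G.Adj a d → False

lemma p4Free_of_no_embedding {V : Type} {G : SimpleGraph V}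
    (h : ¬ Nonempty (SimpleGraph.pathGraph 4 ↪g G)) : P4Free G := by
  intro a b c d hab hbc hcd hac hbd had
  have h1 : a ≠ b := hab.ne
  have h2 : b ≠ c := hbc.ne
  have h3 : c ≠ d := hcd.ne
  have h4 : a ≠ c := by rintro rfl; exact had hcd
  have h5 : b ≠ d := by rintro rfl; exact had hab
  have h6 : a ≠ d := by rintro rfl; exact hac hcd.symm
  refine h ⟨⟨⟨![a, b, c, d], ?_⟩, ?_⟩⟩
  · intro i j hij
    fin_cases i <;> fin_cases j <;> simp_all
  · intro i j
    have hab' := hab.symm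
    have hbc' := hbc.symm
    have hcd' := hcd.symm
    have hac' : ¬ G.Adj c a := fun e => hac e.symm
    have hbd' : ¬ G.Adj d b := fun e => hbd e.symm
    have had' : ¬ G.Adj d a := fun e => had e.symm
    show G.Adj (![a, b, c, d] i) (![a, b, c, d] j) ↔ _
    fin_cases i <;> fin_cases j <;> simp [SimpleGraph.pathGraph_adj, *]

lemma P4Free.compl {V : Type} {G : SimpleGraph V} (h : P4Free G) : P4Free Gᶜ := by
  intro a b c d hab hbc hcd hac hbd had
  have h4 : a ≠ c := by rintro rfl; exact had hcd
  have h5 : b ≠ d := by rintro rfl; exact had hab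
  have h6 : a ≠ d := by rintro rfl; exact hac hcd.symm
  simp only [SimpleGraph.compl_adj, not_and, not_not] at *
  exact h b d a c (hbd h5) (had h6).symm (hac h4) (fun e => hab.2 e.symm)
    (fun e => hcd.2 e.symm) hbc.2

/-- `S` is the union of two nonempty disjoint parts without edges of `G` between them. -/
def Splits {V : Type} (G : SimpleGraph V) (S : Finset V) : Prop :=
  ∃ A B : Finset V, A.Nonempty ∧ B.Nonempty ∧ Disjoint A B ∧ A ∪ B = S ∧
    ∀ a ∈ A, ∀ b ∈ B, ¬ G.Adj a b

/-- In a set that splits, the connected component of a vertex `x`, obtained as a smallest set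
containing `x` that has no edges to the rest of `S`. -/
lemma Splits.exists_component {V : Type} {G : SimpleGraph V} {S : Finset V} (h : Splits G S)
    {x : V} (hx : x ∈ S) :
    ∃ A B : Finset V, x ∈ A ∧ B.Nonempty ∧ Disjoint A B ∧ A ∪ B = S ∧
      (∀ a ∈ A, ∀ b ∈ B, ¬ G.Adj a b) ∧ ¬ Splits G A := by
  have key : ∃ n, ∃ A B : Finset V, A.card = n ∧ x ∈ A ∧ B.Nonempty ∧ Disjoint A B ∧ A ∪ B = S ∧
      (∀ a ∈ A, ∀ b ∈ B, ¬ G.Adj a b) := by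
    obtain ⟨A, B, hA, hB, hd, rfl, hn⟩ := h
    rcases Finset.mem_union.1 hx with hx | hx
    · exact ⟨_, A, B, rfl, hx, hB, hd, rfl, hn⟩
    · exact ⟨_, B, A, rfl, hx, hA, hd.symm, Finset.union_comm _ _,
        fun b hb a ha e => hn a ha b hb e.symm⟩
  obtain ⟨A, B, hcard, hxA, hB, hd, hU, hn⟩ := Nat.find_spec key
  refine ⟨A, B, hxA, hB, hd, hU, hn, ?_⟩
  have main : ∀ A₁ A₂ : Finset V, x ∈ A₁ → A₂.Nonempty → Disjoint A₁ A₂ → A₁ ∪ A₂ = A →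
      (∀ a ∈ A₁, ∀ b ∈ A₂, ¬ G.Adj a b) → False := by
    rintro A₁ A₂ h1 h2 hd' rfl hn'
    rw [Finset.disjoint_union_left] at hd
    refine Nat.find_min key (m := A₁.card) ?_ ⟨A₁, A₂ ∪ B, rfl, h1, h2.mono Finset.subset_union_left,
      ?_, ?_, ?_⟩
    · rw [← hcard, Finset.card_union_of_disjoint hd']
      have := h2.card_pos
      omega
    · rw [Finset.disjoint_union_right]; exact ⟨hd', hd.1⟩
    · rw [← hU, Finset.union_assoc]
    · intro a ha b hb
      rcases Finset.mem_union.1 hb with hb | hb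
      · exact hn' a ha b hb
      · exact hn a (Finset.mem_union_left _ ha) b hb
  rintro ⟨A₁, A₂, h1, h2, hd', hU', hn'⟩
  rcases Finset.mem_union.1 (hU' ▸ hxA) with hx1 | hx1
  · exact main A₁ A₂ hx1 h2 hd' hU' hn'
  · exact main A₂ A₁ hx1 h1 hd'.symm (by rw [Finset.union_comm, hU'])
      fun b hb a ha e => hn' a ha b hb e.symm

/-- Adding a vertex to a disconnected cograph leaves the graph or its complement disconnected. -/
lemma Splits.insert_vertex {V : Type} {G : SimpleGraph V} (hG : P4Free G) {S : Finset V} {v : V}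
    (hv : v ∉ S) (h : Splits G S) :
    Splits G (insert v S) ∨ Splits Gᶜ (insert v S) := by
  by_cases hall : ∀ x ∈ S, G.Adj v x
  · right
    obtain ⟨A, _, ⟨a, ha⟩, _, _, hU, _⟩ := h
    refine ⟨{v}, S, Finset.singleton_nonempty _, ⟨a, hU ▸ Finset.mem_union_left _ ha⟩,
      Finset.disjoint_singleton_left.2 hv, by rw [Finset.insert_eq], ?_⟩
    intro a ha b hb e
    rw [Finset.mem_singleton.1 ha] at e
    exact e.2 (hall b hb)
  left
  push Not at hall
  obtain ⟨x, hxS, hvx⟩ := hall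
  obtain ⟨A, B, hxA, hB, hd, rfl, hn, hns⟩ := h.exists_component hxS
  have hvA : v ∉ A := fun h => hv (Finset.mem_union_left _ h)
  have hvB : v ∉ B := fun h => hv (Finset.mem_union_right _ h)
  by_cases hA : ∀ y ∈ A, ¬ G.Adj v y
  · refine ⟨A, insert v B, ⟨x, hxA⟩, ⟨v, Finset.mem_insert_self _ _⟩, ?_, ?_, ?_⟩
    · rw [Finset.disjoint_insert_right]; exact ⟨hvA, hd⟩
    · rw [Finset.union_insert]
    · intro a ha b hb
      rcases Finset.mem_insert.1 hb with rfl | hb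
      · exact fun e => hA a ha e.symm
      · exact hn a ha b hb
  push Not at hA
  obtain ⟨y, hyA, hvy⟩ := hA
  -- connectedness of `A` provides an edge `p q` of `A` with `v` adjacent to `q` only
  obtain ⟨p, hp, q, hq, hvp, hvq, hpq⟩ : ∃ p ∈ A, ∃ q ∈ A, ¬ G.Adj v p ∧ G.Adj v q ∧ G.Adj p q := by
    by_contra hcon
    push Not at hcon
    refine hns ⟨A.filter fun z => ¬ G.Adj v z, A.filter fun z => G.Adj v z,
      ⟨x, by simp [hxA, hvx]⟩, ⟨y, by simp [hyA, hvy]⟩, ?_, ?_, ?_⟩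
    · exact (Finset.disjoint_filter_filter_not _ _ _).symm
    · ext z; simp only [Finset.mem_union, Finset.mem_filter]; tauto
    · intro a ha b hb
      simp only [Finset.mem_filter] at ha hb
      exact hcon a ha.1 b hb.1 ha.2 hb.2
  refine ⟨insert v A, B, ⟨v, Finset.mem_insert_self _ _⟩, hB, ?_, ?_, ?_⟩
  · rw [Finset.disjoint_insert_left]; exact ⟨hvB, hd⟩
  · rw [Finset.insert_union]
  · intro a ha b hb
    rcases Finset.mem_insert.1 ha with rfl | ha
    · intro e
      exact hG p q a b hpq hvq.symm e (fun e => hvp e.symm) (hn q hq b hb) (hn p hp b hb)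
    · exact hn a ha b hb

/-- A cograph on at least two vertices is disconnected or has a disconnected complement. -/
lemma P4Free.splits {V : Type} {G : SimpleGraph V} (hG : P4Free G) (S : Finset V)
    (hS : 2 ≤ S.card) : Splits G S ∨ Splits Gᶜ S := by
  induction S using Finset.induction_on with
  | empty => simp at hS
  | insert v S hv ih =>
    rw [Finset.card_insert_of_notMem hv] at hS
    by_cases h2 : 2 ≤ S.card
    · rcases ih h2 with h | h
      · exact h.insert_vertex hG hv
      · have := h.insert_vertex hG.compl hv
        rw [compl_compl] at this
        exact this.symm
    · obtain ⟨w, rfl⟩ := Finset.card_eq_one.1 (show S.card = 1 by omega)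
      have hvw : v ≠ w := by simpa using hv
      have : ∀ H : SimpleGraph V, ¬ H.Adj v w → Splits H {v, w} := fun H hH =>
        ⟨{v}, {w}, by simp, by simp, by simpa using hvw, rfl, by simpa using hH⟩
      by_cases h : G.Adj v w
      · exact Or.inr (this _ fun e => e.2 h)
      · exact Or.inl (this _ h)

/-! ### A decomposition rank bounding linear clique-width -/

/-- `Rk G k S`: the cograph `G[S]` has a decomposition into unions and joins in which, along every
branch, one descends at most `k` times into the second part. Such a decomposition is
turned into a linear clique-width expression with `k + 1` labels. The predicate does not
distinguish between `G` and its complement. -/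
inductive Rk {V : Type} (G : SimpleGraph V) : ℕ → Finset V → Prop
  | single (k : ℕ) (v : V) : Rk G k {v}
  | comb (k : ℕ) (A B : Finset V) : Disjoint A B →
      ((∀ a ∈ A, ∀ b ∈ B, G.Adj a b) ∨ (∀ a ∈ A, ∀ b ∈ B, ¬ G.Adj a b)) →
      Rk G (k + 1) A → Rk G k B → Rk G (k + 1) (A ∪ B)

lemma Rk.succ {V : Type} {G : SimpleGraph V} {k : ℕ} {S : Finset V} (h : Rk G k S) :
    Rk G (k + 1) S := by
  induction h with
  | single k v => exact Rk.single _ v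
  | comb k A B hd hh _ _ ihA ihB => exact Rk.comb _ A B hd hh ihA ihB

lemma Rk.mono {V : Type} {G : SimpleGraph V} {k l : ℕ} {S : Finset V} (h : Rk G k S)
    (hkl : k ≤ l) : Rk G l S := by
  induction hkl with
  | refl => exact h
  | step _ ih => exact ih.succ

lemma Rk.compl {V : Type} {G : SimpleGraph V} {k : ℕ} {S : Finset V} (h : Rk G k S) :
    Rk Gᶜ k S := by
  induction h with
  | single k v => exact Rk.single _ v
  | comb k A B hd hh _ _ ihA ihB =>
    refine Rk.comb _ A B hd ?_ ihA ihB
    rcases hh with hh | hh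
    · exact Or.inr fun a ha b hb e => e.2 (hh a ha b hb)
    · exact Or.inl fun a ha b hb =>
        (SimpleGraph.compl_adj _ _ _).2 ⟨Finset.disjoint_iff_ne.1 hd a ha b hb, hh a ha b hb⟩

/-- Starting from any configuration in which the labels `0, …, k` are not in use, the graph `G[S]`
can be added with these labels, without touching what is there already, so that all vertices
of `S` end with label `0`. -/
lemma Rk.build {V : Type} {G : SimpleGraph V} {k : ℕ} {S : Finset V} (h : Rk G k S) :
    ∀ K : ℕ, k ≤ K → ∀ C : LCWConfig V (K + 1), (∀ x ∈ C.verts, x ∉ S) →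
      (∀ x ∈ C.verts, k < (C.lab x : ℕ)) →
      ∃ ℓ : V → Fin (K + 1), Relation.ReflTransGen LCWStep C
        ⟨C.verts ∪ S, fun x y => C.adj x y ∨ (x ∈ S ∧ y ∈ S ∧ G.Adj x y), ℓ⟩ ∧
        (∀ x ∈ C.verts, ℓ x = C.lab x) ∧ ∀ x ∈ S, ℓ x = 0 := by
  induction h with
  | single k v =>
    intro K _ C hC hlab
    refine ⟨fun x => if x = v then 0 else C.lab x, ?_, ?_, ?_⟩
    · have := LCWStep.intro C v (fun h => hC v h (by simp)) 0
      convert Relation.ReflTransGen.single this using 2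
      · ext; simp
      · funext x y
        simp only [Finset.mem_singleton, eq_iff_iff, or_iff_left_iff_imp]
        rintro ⟨rfl, rfl, h⟩
        exact absurd h (G.loopless.irrefl _)
    · intro x hx
      have : x ≠ v := by simpa using hC x hx
      simp [this]
    · simp
  | comb k A B hd hh _ _ ihA ihB =>
    intro K hK C hC hlab
    obtain ⟨ℓ₁, run₁, old₁, new₁⟩ := ihA K hK C
      (fun x hx hA => hC x hx (Finset.mem_union_left _ hA)) hlab
    -- `A` is parked under the label `k + 1` while `B` is built
    let p : Fin (K + 1) := ⟨k + 1, by omega⟩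
    have hp0 : (0 : Fin (K + 1)) ≠ p := by simp [p, Fin.ext_iff]
    have hltp : ∀ x ∈ C.verts, C.lab x ≠ p ∧ C.lab x ≠ 0 := by
      intro x hx
      have := hlab x hx
      refine ⟨fun e => ?_, fun e => ?_⟩ <;> rw [e] at this <;> simp [p] at this
    have step₂ := LCWStep.relabel
      ⟨C.verts ∪ A, fun x y => C.adj x y ∨ (x ∈ A ∧ y ∈ A ∧ G.Adj x y), ℓ₁⟩ 0 p hp0
    obtain ⟨ℓ₃, run₃, old₃, new₃⟩ := ihB K (by omega)
      ⟨C.verts ∪ A, fun x y => C.adj x y ∨ (x ∈ A ∧ y ∈ A ∧ G.Adj x y),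
        fun x => if ℓ₁ x = 0 then p else ℓ₁ x⟩
      (by
        rintro x (hx | hx) hB
        · exact hC x hx (Finset.mem_union_right _ hB)
        · exact Finset.disjoint_left.1 hd hx hB)
      (by
        rintro x (hx | hx)
        · have := hlab x hx
          simp only [old₁ x hx, (hltp x hx).2, if_false]
          omega
        · simp [new₁ x hx, p])
    have labA : ∀ x ∈ A, ℓ₃ x = p := fun x hx => by
      rw [old₃ x (Or.inr hx)]; simp [new₁ x hx]
    have labC : ∀ x ∈ C.verts, ℓ₃ x = C.lab x := fun x hx => by
      rw [old₃ x (Or.inl hx)]; simp [old₁ x hx, (hltp x hx).2]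
    have run₁₃ := (run₁.tail step₂).trans run₃
    have fin_old : ∀ x ∈ C.verts, (if ℓ₃ x = p then 0 else ℓ₃ x) = C.lab x := fun x hx => by
      rw [labC x hx, if_neg (hltp x hx).1]
    have fin_new : ∀ x ∈ A ∪ B, (if ℓ₃ x = p then 0 else ℓ₃ x) = 0 := fun x hx => by
      rcases Finset.mem_union.1 hx with hx | hx
      · simp [labA x hx]
      · simp [new₃ x hx]
    refine ⟨fun x => if ℓ₃ x = p then 0 else ℓ₃ x, ?_, fin_old, fin_new⟩
    have hverts : C.verts ∪ (↑(A ∪ B) : Set V) = C.verts ∪ ↑A ∪ ↑B := by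
      rw [Finset.coe_union, Set.union_assoc]
    rcases hh with hh | hh
    · have run₄ := (run₁₃.tail (LCWStep.join _ 0 p hp0)).tail (LCWStep.relabel _ p 0 hp0.symm)
      convert run₄ using 2
      funext x y
      have mem : ∀ z, z ∈ C.verts ∪ ↑A ∪ (↑B : Set V) →
          ((ℓ₃ z = 0 ↔ z ∈ B) ∧ (ℓ₃ z = p ↔ z ∈ A)) := by
        rintro z ((hz | hz) | hz)
        · have := hC z hz
          rw [Finset.mem_union] at this
          rw [labC z hz]
          have := hltp z hz
          tauto
        · have := Finset.disjoint_left.1 hd hz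
          have := hp0.symm
          rw [labA z hz]; tauto
        · have := Finset.disjoint_right.1 hd hz
          rw [new₃ z hz]; tauto
      have memx := mem x
      have memy := mem y
      have hxy : x ∈ A → y ∈ B → G.Adj x y := fun h => hh x h y
      have hyx : y ∈ A → x ∈ B → G.Adj x y := fun h h' => (hh y h x h').symm
      simp only [Finset.mem_union, Set.mem_union, Finset.mem_coe, eq_iff_iff] at memx memy ⊢
      clear run₁ step₂ run₃ run₁₃ run₄ ihA ihB mem fin_old fin_new old₃
      grind
    · have run₄ := run₁₃.tail (LCWStep.relabel _ p 0 hp0.symm)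
      convert run₄ using 2
      funext x y
      have hxy : x ∈ A → y ∈ B → ¬ G.Adj x y := fun h => hh x h y
      have hyx : y ∈ A → x ∈ B → ¬ G.Adj x y := fun h h' e => hh y h x h' e.symm
      simp only [Finset.mem_union, eq_iff_iff]
      clear run₁ step₂ run₃ run₁₃ run₄ ihA ihB fin_old fin_new old₃
      grind

lemma Rk.lcwLE {V : Type} [Fintype V] {G : SimpleGraph V} {k : ℕ} (h : Rk G k Finset.univ) :
    lcwLE G (k + 1) := by
  obtain ⟨ℓ, run, -, -⟩ := h.build k le_rfl ⟨∅, fun _ _ => False, fun _ => 0⟩ (by simp) (by simp)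
  refine ⟨fun _ => 0, ℓ, ?_⟩
  convert run using 2
  · simp
  · funext x y; simp

lemma lcwLE_of_isEmpty {V : Type} [IsEmpty V] (G : SimpleGraph V) (k : ℕ) : lcwLE G k := by
  refine ⟨isEmptyElim, isEmptyElim, ?_⟩
  convert Relation.ReflTransGen.refl using 2
  · exact Set.univ_eq_empty_iff.2 inferInstance

lemma Splits.rk {V : Type} {G : SimpleGraph V} {S : Finset V} {k : ℕ} (h : Splits G S)
    (ih : ∀ T ⊂ S, T.Nonempty → Rk G k T) : Rk G (k + 1) S := by
  obtain ⟨A, B, hA, hB, hd, rfl, hn⟩ := h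
  refine Rk.comb _ A B hd (Or.inr hn) (ih A ?_ hA).succ (ih B ?_ hB)
  · refine Finset.ssubset_iff_subset_ne.2 ⟨Finset.subset_union_left, fun e => ?_⟩
    obtain ⟨b, hb⟩ := hB
    exact Finset.disjoint_right.1 hd hb (e ▸ Finset.mem_union_right _ hb)
  · refine Finset.ssubset_iff_subset_ne.2 ⟨Finset.subset_union_right, fun e => ?_⟩
    obtain ⟨b, hb⟩ := hA
    exact Finset.disjoint_left.1 hd hb (e ▸ Finset.mem_union_left _ hb)

/-- Every cograph has some finite decomposition rank; hence its linear clique-width is attained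
and not a junk value. -/
lemma P4Free.rk_card {V : Type} {G : SimpleGraph V} (hG : P4Free G) :
    ∀ (n : ℕ) (S : Finset V), S.card ≤ n → S.Nonempty → Rk G n S := by
  intro n
  induction n with
  | zero => intro S h hS; have := hS.card_pos; omega
  | succ n ih =>
    intro S h hS
    by_cases h2 : 2 ≤ S.card
    · have hT : ∀ T ⊂ S, T.Nonempty → Rk G n T := fun T hT hne =>
        ih T (by have := Finset.card_lt_card hT; omega) hne
      rcases hG.splits S h2 with hs | hs
      · exact hs.rk hT
      · simpa using (hs.rk fun T hTS hne => (hT T hTS hne).compl).compl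
    · have := hS.card_pos
      obtain ⟨w, rfl⟩ := Finset.card_eq_one.1 (show S.card = 1 by omega)
      exact Rk.single _ w

lemma P4Free.lcwLE_lcw {V : Type} [Fintype V] {G : SimpleGraph V} (hG : P4Free G) :
    lcwLE G (lcw G) := by
  suffices h : {k | lcwLE G k}.Nonempty from Nat.sInf_mem h
  cases isEmpty_or_nonempty V
  · exact ⟨0, lcwLE_of_isEmpty G 0⟩
  · exact ⟨_, (hG.rk_card _ Finset.univ le_rfl Finset.univ_nonempty).lcwLE⟩

/-! ### Adjacency in disjoint unions and joins -/

section Adjacency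

variable {V W : Type} (G : SimpleGraph V) (H : SimpleGraph W)

lemma sum_inl_inl (a b : V) : (G ⊕g H).Adj (Sum.inl a) (Sum.inl b) ↔ G.Adj a b := by simp

lemma sum_inr_inr (a b : W) : (G ⊕g H).Adj (Sum.inr a) (Sum.inr b) ↔ H.Adj a b := by simp

lemma sum_inl_inr (a : V) (b : W) : ¬ (G ⊕g H).Adj (Sum.inl a) (Sum.inr b) := by simp

lemma sum_inr_inl (a : W) (b : V) : ¬ (G ⊕g H).Adj (Sum.inr a) (Sum.inl b) := by simp

lemma gjoin_inl_inl (a b : V) : (GJoin G H).Adj (Sum.inl a) (Sum.inl b) ↔ G.Adj a b := by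
  have := fun h : G.Adj a b => h.ne
  simp [GJoin]; tauto

lemma gjoin_inr_inr (a b : W) : (GJoin G H).Adj (Sum.inr a) (Sum.inr b) ↔ H.Adj a b := by
  have := fun h : H.Adj a b => h.ne
  simp [GJoin]; tauto

lemma gjoin_inl_inr (a : V) (b : W) : (GJoin G H).Adj (Sum.inl a) (Sum.inr b) := by
  simp [GJoin]

lemma gjoin_inr_inl (a : W) (b : V) : (GJoin G H).Adj (Sum.inr a) (Sum.inl b) := by
  simp [GJoin]

end Adjacency

/-! ### Upper bound: excluding universal quasi-threshold graphs -/

/-- `Has G s S` says that `G[S]` contains an induced copy of `QGraph s`, in recursive form. -/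
def Has {V : Type} (G : SimpleGraph V) : ℕ → Finset V → Prop
  | 0, S => S.Nonempty
  | s + 1, S => ∃ (v : V) (A B : Finset V), v ∈ S ∧ A ⊆ S ∧ B ⊆ S ∧ Has G s A ∧ Has G s B ∧
      (∀ a ∈ A, G.Adj v a) ∧ (∀ b ∈ B, v ≠ b ∧ ¬ G.Adj v b) ∧
      ∀ a ∈ A, ∀ b ∈ B, a ≠ b ∧ ¬ G.Adj a b

lemma Has.mono {V : Type} {G : SimpleGraph V} {s : ℕ} {S T : Finset V} (h : Has G s S)
    (hST : S ⊆ T) : Has G s T := by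
  cases s with
  | zero => exact Finset.Nonempty.mono hST h
  | succ s =>
    obtain ⟨v, A, B, h1, h2, h3, h4⟩ := h
    exact ⟨v, A, B, hST h1, h2.trans hST, h3.trans hST, h4⟩

lemma Has.exists_embedding {V : Type} {G : SimpleGraph V} {s : ℕ} :
    ∀ {S : Finset V}, Has G s S → ∃ f : QGraph s ↪g G, ∀ x, f x ∈ S := by
  induction s with
  | zero =>
    rintro S ⟨v, hv⟩
    refine ⟨⟨⟨fun _ => v, ?_⟩, ?_⟩, fun _ => hv⟩
    · intro (x : Fin 1) (y : Fin 1) _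
      exact Subsingleton.elim x y
    · intro a b
      exact iff_of_false (G.loopless.irrefl v) (by simp [QGraph])
  | succ s ih =>
    rintro S ⟨v, A, B, hv, hA, hB, hsA, hsB, hvA, hvB, hAB⟩
    obtain ⟨f, hf⟩ := ih hsA
    obtain ⟨g, hg⟩ := ih hsB
    let F : (Fin 1 ⊕ QVert s) ⊕ QVert s → V := Sum.elim (Sum.elim (fun _ => v) f) g
    have hinj : Function.Injective F := by
      rintro ((x | x) | x) ((y | y) | y) h <;> simp only [F, Sum.elim_inl, Sum.elim_inr] at h
      · rw [Subsingleton.elim x y]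
      · exact absurd h (hvA _ (hf y)).ne
      · exact absurd h (hvB _ (hg y)).1
      · exact absurd h.symm (hvA _ (hf x)).ne
      · rw [f.injective h]
      · exact absurd h (hAB _ (hf x) _ (hg y)).1
      · exact absurd h.symm (hvB _ (hg x)).1
      · exact absurd h.symm (hAB _ (hf y) _ (hg x)).1
      · rw [g.injective h]
    refine ⟨⟨⟨F, hinj⟩, ?_⟩, ?_⟩
    · show ∀ {x y : (Fin 1 ⊕ QVert s) ⊕ QVert s}, G.Adj (F x) (F y) ↔
        ((GJoin (⊥ : SimpleGraph (Fin 1)) (QGraph s)) ⊕g (QGraph s)).Adj x y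
      rintro ((x | x) | x) ((y | y) | y) <;>
        simp only [F, Sum.elim_inl, Sum.elim_inr, sum_inl_inl, sum_inr_inr, sum_inl_inr,
          sum_inr_inl, gjoin_inl_inl, gjoin_inl_inr, gjoin_inr_inl, gjoin_inr_inr, iff_true,
          iff_false]
      · simp
      · exact hvA _ (hf y)
      · exact (hvB _ (hg y)).2
      · exact (hvA _ (hf x)).symm
      · exact f.map_adj_iff
      · exact (hAB _ (hf x) _ (hg y)).2
      · exact fun e => (hvB _ (hg x)).2 e.symm
      · exact fun e => (hAB _ (hf y) _ (hg x)).2 e.symm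
      · exact g.map_adj_iff
    · show ∀ x : (Fin 1 ⊕ QVert s) ⊕ QVert s, F x ∈ S
      rintro ((x | x) | x)
      · exact hv
      · exact hA (hf x)
      · exact hB (hg x)

/-- The disconnected case of the upper bound. Split off a component `A`, with rest `B`. If neither
part has rank at most `k + 1`, then `B` contains `QGraph s`; moreover `A`, being
connected, is a join of two parts, one of which has rank more than `k` and so contains
`QGraph s`. A vertex of the other part completes these to a copy of `QGraph (s + 1)`. -/
lemma Splits.rk_of_not_has {V : Type} {G : SimpleGraph V} (hG : P4Free G) {s k : ℕ} {S : Finset V}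
    (h : Splits G S) (hs : ¬ Has G (s + 1) S)
    (outer : ∀ T ⊆ S, T.Nonempty → ¬ Has G s T → Rk G k T)
    (inner : ∀ T ⊂ S, T.Nonempty → Rk G (k + 2) T) : Rk G (k + 2) S := by
  obtain ⟨x, hxS⟩ : S.Nonempty := by
    obtain ⟨A, _, ⟨a, ha⟩, _, _, hU, _⟩ := h
    exact ⟨a, hU ▸ Finset.mem_union_left _ ha⟩
  obtain ⟨A, B, hxA, hB, hd, rfl, hn, hns⟩ := h.exists_component hxS
  have hAne : A.Nonempty := ⟨x, hxA⟩
  have hAS : A ⊂ A ∪ B := by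
    refine Finset.ssubset_iff_subset_ne.2 ⟨Finset.subset_union_left, fun e => ?_⟩
    obtain ⟨b, hb⟩ := hB
    exact Finset.disjoint_right.1 hd hb (e ▸ Finset.mem_union_right _ hb)
  have hBS : B ⊂ A ∪ B := by
    refine Finset.ssubset_iff_subset_ne.2 ⟨Finset.subset_union_right, fun e => ?_⟩
    exact Finset.disjoint_left.1 hd hxA (e ▸ Finset.mem_union_left _ hxA)
  by_cases hkB : Rk G (k + 1) B
  · exact Rk.comb _ A B hd (Or.inr hn) (inner A hAS hAne) hkB
  by_cases hkA : Rk G (k + 1) A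
  · rw [Finset.union_comm]
    exact Rk.comb _ B A hd.symm (Or.inr fun b hb a ha e => hn a ha b hb e.symm)
      (inner B hBS hB) hkA
  exfalso
  have hasB : Has G s B := by
    by_contra hcon
    exact hkB (outer B hBS.subset hB hcon).succ
  have hA2 : 2 ≤ A.card := by
    by_contra hcon
    have := hAne.card_pos
    obtain ⟨w, rfl⟩ := Finset.card_eq_one.1 (show A.card = 1 by omega)
    exact hkA (Rk.single _ w)
  have main : ∀ A₁ A₂ : Finset V, A₁ ⊆ A → A₂ ⊆ A → A₁.Nonempty →
      (∀ a ∈ A₁, ∀ b ∈ A₂, G.Adj a b) → ¬ Has G s A₂ := by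
    rintro A₁ A₂ h1 h2 ⟨v, hv⟩ hj hh
    exact hs ⟨v, A₂, B, hAS.subset (h1 hv), h2.trans hAS.subset, hBS.subset, hh, hasB, hj v hv,
      fun b hb => ⟨Finset.disjoint_iff_ne.1 hd v (h1 hv) b hb, hn v (h1 hv) b hb⟩,
      fun a ha b hb => ⟨Finset.disjoint_iff_ne.1 hd a (h2 ha) b hb, hn a (h2 ha) b hb⟩⟩
  rcases hG.splits A hA2 with hsp | ⟨A₁, A₂, h1, h2, hd', hU', hj⟩
  · exact hns hsp
  have hj' : ∀ a ∈ A₁, ∀ b ∈ A₂, G.Adj a b := by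
    intro a ha b hb
    have := hj a ha b hb
    rw [SimpleGraph.compl_adj, not_and, not_not] at this
    exact this (Finset.disjoint_iff_ne.1 hd' a ha b hb)
  have s1 : A₁ ⊆ A := hU' ▸ Finset.subset_union_left
  have s2 : A₂ ⊆ A := hU' ▸ Finset.subset_union_right
  have r2 := outer A₂ (s2.trans hAS.subset) h2 (main A₁ A₂ s1 s2 h1 hj')
  have r1 := outer A₁ (s1.trans hAS.subset) h1
    (main A₂ A₁ s2 s1 h2 fun a ha b hb => (hj' b hb a ha).symm)
  apply hkA
  rw [← hU']
  exact Rk.comb _ A₁ A₂ hd' (Or.inl hj') r1.succ r2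

lemma P4Free.rk_of_not_has {V : Type} {G : SimpleGraph V} (hG : P4Free G) :
    ∀ (m s t : ℕ), s + t = m → ∀ S : Finset V, S.Nonempty → ¬ Has G s S → ¬ Has Gᶜ t S →
      Rk G (2 * m) S := by
  intro m
  induction m with
  | zero =>
    intro s t hst S hS hs _
    obtain rfl : s = 0 := by omega
    exact absurd hS hs
  | succ m outer =>
    intro s t hst S
    induction S using Finset.strongInduction with
    | H S inner =>
    intro hS hs ht
    have inner' : ∀ T ⊂ S, T.Nonempty → Rk G (2 * m + 2) T := fun T hT hne =>
      inner T hT hne (fun h => hs (h.mono hT.subset)) fun h => ht (h.mono hT.subset)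
    cases s with
    | zero => exact absurd hS hs
    | succ s =>
    cases t with
    | zero => exact absurd hS ht
    | succ t =>
    by_cases h2 : 2 ≤ S.card
    · rcases hG.splits S h2 with hsp | hsp
      · exact hsp.rk_of_not_has hG hs (fun T hT hne hh =>
          outer s (t + 1) (by omega) T hne hh fun h => ht (h.mono hT)) inner'
      · have := hsp.rk_of_not_has (k := 2 * m) hG.compl ht (fun T hT hne hh =>
          (outer (s + 1) t (by omega) T hne (fun h => hs (h.mono hT)) hh).compl)
          fun T hT hne => (inner' T hT hne).compl
        have := this.compl
        rwa [compl_compl] at this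
    · have := hS.card_pos
      obtain ⟨w, rfl⟩ := Finset.card_eq_one.1 (show S.card = 1 by omega)
      exact Rk.single _ w

lemma P4Free.lcw_le {V : Type} [Fintype V] {G : SimpleGraph V} (hG : P4Free G) {s t : ℕ}
    (hs : ¬ Nonempty (QGraph s ↪g G)) (ht : ¬ Nonempty (QGraph t ↪g Gᶜ)) :
    lcw G ≤ 2 * (s + t) + 1 := by
  apply Nat.sInf_le
  show lcwLE _ _
  cases isEmpty_or_nonempty V
  · exact lcwLE_of_isEmpty G _
  · exact (hG.rk_of_not_has _ s t rfl Finset.univ Finset.univ_nonempty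
      (fun h => hs ⟨h.exists_embedding.choose⟩) fun h => ht ⟨h.exists_embedding.choose⟩).lcwLE

/-! ### Universality of the graphs `QGraph` -/

/-- Joining with `K₁` is monotone for induced subgraphs. -/
def joinEmb {V W : Type} {G : SimpleGraph V} {H : SimpleGraph W} (f : G ↪g H) :
    GJoin (⊥ : SimpleGraph (Fin 1)) G ↪g GJoin (⊥ : SimpleGraph (Fin 1)) H where
  toFun := Sum.map id f
  inj' := Function.Injective.sumMap Function.injective_id f.injective
  map_rel_iff' := by
    rintro (a | a) (b | b) <;> simp [GJoin, f.injective.eq_iff]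

/-- Disjoint union is monotone for induced subgraphs. -/
def sumEmb {V W V' W' : Type} {G : SimpleGraph V} {H : SimpleGraph W} {G' : SimpleGraph V'}
    {H' : SimpleGraph W'} (f : G ↪g G') (g : H ↪g H') : (G ⊕g H) ↪g (G' ⊕g H') where
  toFun := Sum.map f g
  inj' := Function.Injective.sumMap f.injective g.injective
  map_rel_iff' := by
    rintro (a | a) (b | b) <;> simp

lemma nonempty_joinEmb (s : ℕ) :
    Nonempty (GJoin (⊥ : SimpleGraph (Fin 1)) (QGraph s) ↪g QGraph (s + 1)) :=
  ⟨⟨⟨Sum.inl, Sum.inl_injective⟩, by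
    intro a b
    exact sum_inl_inl (GJoin (⊥ : SimpleGraph (Fin 1)) (QGraph s)) (QGraph s) a b⟩⟩

lemma nonempty_succEmb (s : ℕ) : Nonempty (QGraph s ↪g QGraph (s + 1)) :=
  ⟨⟨⟨Sum.inr, Sum.inr_injective⟩, by
    intro a b
    exact sum_inr_inr (GJoin (⊥ : SimpleGraph (Fin 1)) (QGraph s)) (QGraph s) a b⟩⟩

lemma nonempty_leEmb {s t : ℕ} (h : s ≤ t) : Nonempty (QGraph s ↪g QGraph t) := by
  induction h with
  | refl => exact ⟨SimpleGraph.Embedding.refl⟩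
  | step _ ih =>
    obtain ⟨f⟩ := ih
    obtain ⟨g⟩ := nonempty_succEmb _
    exact ⟨g.comp f⟩

lemma nonempty_inrJoinEmb {V : Type} (G : SimpleGraph V) :
    Nonempty (G ↪g GJoin (⊥ : SimpleGraph (Fin 1)) G) :=
  ⟨⟨⟨Sum.inr, Sum.inr_injective⟩, by
    intro a b
    exact gjoin_inr_inr _ G a b⟩⟩

/-- Every quasi-threshold graph is an induced subgraph of some universal one. -/
lemma IsQT.exists_embedding {V : Type} {G : SimpleGraph V} (h : IsQT G) :
    ∃ s, Nonempty (G ↪g QGraph s) := by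
  induction h with
  | single => exact ⟨0, ⟨SimpleGraph.Embedding.refl⟩⟩
  | joinK1 _ ih =>
    obtain ⟨s, ⟨f⟩⟩ := ih
    obtain ⟨g⟩ := nonempty_joinEmb s
    exact ⟨s + 1, ⟨g.comp (joinEmb f)⟩⟩
  | union _ _ ih₁ ih₂ =>
    obtain ⟨s, ⟨f⟩⟩ := ih₁
    obtain ⟨t, ⟨g⟩⟩ := ih₂
    obtain ⟨f'⟩ := nonempty_leEmb (le_max_left s t)
    obtain ⟨g'⟩ := nonempty_leEmb (le_max_right s t)
    obtain ⟨e⟩ := nonempty_inrJoinEmb (QGraph (max s t))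
    exact ⟨max s t + 1, ⟨(sumEmb (e.comp (f'.comp f)) (g'.comp g) :)⟩⟩
  | iso _ e ih =>
    obtain ⟨s, ⟨f⟩⟩ := ih
    obtain ⟨e⟩ := e
    exact ⟨s, ⟨f.comp e.symm.toEmbedding⟩⟩

lemma nonempty_complEmb {V W : Type} {G : SimpleGraph V} {H : SimpleGraph W} (f : G ↪g H) :
    Nonempty (Gᶜ ↪g Hᶜ) :=
  ⟨⟨f.toEmbedding, by intro a b; simp⟩⟩

/-! ### Lower bound: cuts with many traces -/

/-- For every injective arrival time `τ`, at some time `t` there are `k` vertices that have arrived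
and whose neighbourhoods among the vertices still to come are nonempty and pairwise
distinct. -/
def ManyTraces {V : Type} (G : SimpleGraph V) (k : ℕ) : Prop :=
  ∀ τ : V → ℕ, Function.Injective τ → ∃ (t : ℕ) (f : Fin k → V),
    (∀ i, τ (f i) < t) ∧ (∀ i, ∃ y, t ≤ τ y ∧ G.Adj (f i) y) ∧
    ∀ i j, i ≠ j → ∃ y, t ≤ τ y ∧ ¬ (G.Adj (f i) y ↔ G.Adj (f j) y)

lemma ManyTraces.iso {V W : Type} {G : SimpleGraph V} {H : SimpleGraph W} {k : ℕ}
    (h : ManyTraces G k) (e : G ≃g H) : ManyTraces H k := by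
  intro τ hτ
  obtain ⟨t, f, h1, h2, h3⟩ := h (τ ∘ e) (hτ.comp e.injective)
  refine ⟨t, e ∘ f, h1, fun i => ?_, fun i j hij => ?_⟩
  · obtain ⟨y, hy, hA⟩ := h2 i
    exact ⟨e y, hy, e.map_adj_iff.2 hA⟩
  · obtain ⟨y, hy, hA⟩ := h3 i j hij
    refine ⟨e y, hy, ?_⟩
    simpa only [Function.comp_apply, e.map_adj_iff] using hA

/-- Three disjoint copies of `H` together with a dominating vertex `r` force one more trace. At the
middle one `t (σ 1)` of the three critical times, the first copy has a vertex that has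
arrived and the last copy has one still to come. If `r` has arrived, its trace meets the
last copy, unlike those from the middle copy; otherwise a vertex of the first copy has a trace
containing `r` and avoiding the middle copy. -/
lemma ManyTraces.triple {V W : Type} {G : SimpleGraph V} {H : SimpleGraph W} {k : ℕ}
    (h : ManyTraces H (k + 1)) (r : V) (c : Fin 3 → W → V) (hc : ∀ i, Function.Injective (c i))
    (same : ∀ i x y, G.Adj (c i x) (c i y) ↔ H.Adj x y)
    (diff : ∀ i j, i ≠ j → ∀ x y, ¬ G.Adj (c i x) (c j y))
    (root : ∀ i x, G.Adj r (c i x)) : ManyTraces G (k + 2) := by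
  intro τ hτ
  choose t f h1 h2 h3 using fun i => h (τ ∘ c i) (hτ.comp (hc i))
  have hmono := Tuple.monotone_sort t
  set σ := Tuple.sort t
  have t01 : t (σ 0) ≤ t (σ 1) := hmono (by decide)
  have t12 : t (σ 1) ≤ t (σ 2) := hmono (by decide)
  have n10 : σ 1 ≠ σ 0 := σ.injective.ne (by decide)
  have n12 : σ 1 ≠ σ 2 := σ.injective.ne (by decide)
  obtain ⟨z, hz, -⟩ := h2 (σ 2) 0
  -- any vertex `w` with a nonempty trace differing from those of the middle copy suffices
  have finish : ∀ w, τ w < t (σ 1) → (∃ y, t (σ 1) ≤ τ y ∧ G.Adj w y) →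
      (∀ i, ∃ y, t (σ 1) ≤ τ y ∧ ¬ (G.Adj w y ↔ G.Adj (c (σ 1) (f (σ 1) i)) y)) →
      ∃ (t : ℕ) (f : Fin (k + 2) → V),
        (∀ i, τ (f i) < t) ∧ (∀ i, ∃ y, t ≤ τ y ∧ G.Adj (f i) y) ∧
        ∀ i j, i ≠ j → ∃ y, t ≤ τ y ∧ ¬ (G.Adj (f i) y ↔ G.Adj (f j) y) := by
    intro w hw1 hw2 hw3
    refine ⟨t (σ 1), Fin.cons w fun i => c (σ 1) (f (σ 1) i), ?_, ?_, ?_⟩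
    · intro i
      refine Fin.cases ?_ (fun i => ?_) i
      · exact hw1
      · exact h1 (σ 1) i
    · intro i
      refine Fin.cases ?_ (fun i => ?_) i
      · exact hw2
      · obtain ⟨y, hy, hA⟩ := h2 (σ 1) i
        exact ⟨_, hy, by simpa using (same _ _ _).2 hA⟩
    · intro i j
      refine Fin.cases ?_ (fun i => ?_) i <;> refine Fin.cases ?_ (fun j => ?_) j
      · simp
      · intro _
        simpa using hw3 j
      · intro _
        simpa [iff_comm] using hw3 i
      · intro hij
        obtain ⟨y, hy, hA⟩ := h3 (σ 1) i j (by simpa using hij)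
        exact ⟨_, hy, by simpa [same] using hA⟩
  by_cases hr : τ r < t (σ 1)
  · refine finish r hr ⟨c (σ 2) z, t12.trans hz, root _ _⟩ fun i => ⟨c (σ 2) z, t12.trans hz, ?_⟩
    simp [root, diff _ _ n12]
  · push Not at hr
    refine finish (c (σ 0) (f (σ 0) 0)) ((h1 (σ 0) 0).trans_le t01) ⟨r, hr, (root _ _).symm⟩
      fun i => ?_
    obtain ⟨y, hy, hA⟩ := h2 (σ 1) i
    exact ⟨_, hy, by simp [diff _ _ n10.symm, same, hA]⟩

lemma manyTraces_pair : ManyTraces (GJoin (⊥ : SimpleGraph (Fin 1)) (⊥ : SimpleGraph (Fin 1))) 1 := by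
  intro τ hτ
  set G := GJoin (⊥ : SimpleGraph (Fin 1)) (⊥ : SimpleGraph (Fin 1)) with hG
  have hadj : G.Adj (Sum.inl 0) (Sum.inr 0) := by simp [hG, GJoin]
  have main : ∀ u v, G.Adj u v → τ u < τ v → ∃ (t : ℕ) (f : Fin 1 → Fin 1 ⊕ Fin 1),
      (∀ i, τ (f i) < t) ∧ (∀ i, ∃ y, t ≤ τ y ∧ G.Adj (f i) y) ∧
      ∀ i j, i ≠ j → ∃ y, t ≤ τ y ∧ ¬ (G.Adj (f i) y ↔ G.Adj (f j) y) := fun u v huv hlt =>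
    ⟨τ v, fun _ => u, fun _ => hlt, fun _ => ⟨v, le_rfl, huv⟩,
      fun i j hij => absurd (Subsingleton.elim i j) hij⟩
  rcases lt_or_gt_of_ne (hτ.ne hadj.ne) with h | h
  · exact main _ _ hadj h
  · exact main _ _ hadj.symm h

lemma exists_isQT_manyTraces (k : ℕ) :
    ∃ (V : Type) (_ : Finite V) (G : SimpleGraph V), IsQT G ∧ ManyTraces G (k + 1) := by
  induction k with
  | zero => exact ⟨_, inferInstance, _, IsQT.joinK1 IsQT.single, manyTraces_pair⟩
  | succ k ih =>
    obtain ⟨V, _, G, hQ, hM⟩ := ih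
    refine ⟨_, inferInstance, _, IsQT.joinK1 (IsQT.union (IsQT.union hQ hQ) hQ),
      hM.triple (Sum.inl 0) ![fun x => Sum.inr (Sum.inl (Sum.inl x)),
        fun x => Sum.inr (Sum.inl (Sum.inr x)), fun x => Sum.inr (Sum.inr x)] ?_ ?_ ?_ ?_⟩
    · intro i x y
      fin_cases i <;> simp
    · intro i x y
      have := fun h : G.Adj x y => h.ne
      fin_cases i <;> simp [GJoin] <;> tauto
    · intro i j hij x y
      fin_cases i <;> fin_cases j <;> simp_all [GJoin]
    · intro i x
      fin_cases i <;> simp [GJoin]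

/-- Two vertices with the same label cannot be told apart by later operations. -/
lemma LCWStep.indist {V : Type} {k : ℕ} {C D : LCWConfig V k} (run : Relation.ReflTransGen LCWStep C D)
    {x y z : V} (hx : x ∈ C.verts) (hy : y ∈ C.verts) (hl : C.lab x = C.lab y)
    (hz : C.adj x z ↔ C.adj y z) :
    x ∈ D.verts ∧ y ∈ D.verts ∧ D.lab x = D.lab y ∧ (D.adj x z ↔ D.adj y z) := by
  induction run with
  | refl => exact ⟨hx, hy, hl, hz⟩
  | tail _ st ih =>
    obtain ⟨hx, hy, hl, hz⟩ := ih
    cases st with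
    | intro v hv c =>
      have h1 : x ≠ v := fun e => hv (e ▸ hx)
      have h2 : y ≠ v := fun e => hv (e ▸ hy)
      simp [hx, hy, hz, hl, h1, h2]
    | join i j hij => simp [hx, hy, hz, hl]
    | relabel i j hij => simp [hx, hy, hz, hl]

/-- Edges only join vertices that have been introduced. -/
lemma LCWStep.adj_mem {V : Type} {k : ℕ} {ℓ₀ : V → Fin k} {D : LCWConfig V k}
    (run : Relation.ReflTransGen LCWStep ⟨∅, fun _ _ => False, ℓ₀⟩ D) {x y : V}
    (h : D.adj x y) : y ∈ D.verts := by
  induction run with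
  | refl => exact h.elim
  | tail _ st ih =>
    cases st with
    | intro v hv c => exact Or.inr (ih h)
    | join i j hij =>
      rcases h with h | h
      · exact ih h
      · exact h.2.1
    | relabel i j hij => exact ih h

/-- The order in which a run introduces the vertices: every initial segment is the vertex set of
an intermediate configuration. -/
lemma LCWStep.exists_order {V : Type} {k : ℕ} {C₀ C : LCWConfig V k} (h₀ : C₀.verts = ∅)
    (run : Relation.ReflTransGen LCWStep C₀ C) :
    ∃ (τ : V → ℕ) (n : ℕ), Set.InjOn τ C.verts ∧ (∀ x ∈ C.verts, τ x < n) ∧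
      ∀ t, ∃ D, Relation.ReflTransGen LCWStep C₀ D ∧ Relation.ReflTransGen LCWStep D C ∧
        D.verts = {x ∈ C.verts | τ x < t} := by
  induction run with
  | refl =>
    exact ⟨fun _ => 0, 0, by simp [h₀], by simp [h₀],
      fun t => ⟨C₀, .refl, .refl, by simp [h₀]⟩⟩
  | @tail C C' run st ih =>
    obtain ⟨τ, n, hinj, hlt, hD⟩ := ih
    have same : C'.verts = C.verts → ∃ (τ : V → ℕ) (n : ℕ), Set.InjOn τ C'.verts ∧
        (∀ x ∈ C'.verts, τ x < n) ∧ ∀ t, ∃ D, Relation.ReflTransGen LCWStep C₀ D ∧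
          Relation.ReflTransGen LCWStep D C' ∧ D.verts = {x ∈ C'.verts | τ x < t} := by
      intro e
      rw [e]
      refine ⟨τ, n, hinj, hlt, fun t => ?_⟩
      obtain ⟨D, r1, r2, hv⟩ := hD t
      exact ⟨D, r1, r2.tail st, hv⟩
    cases st with
    | intro v hv c =>
      have hne : ∀ x ∈ C.verts, x ≠ v := fun x hx e => hv (e ▸ hx)
      have hτ : ∀ x ∈ C.verts, Function.update τ v n x = τ x := fun x hx =>
        Function.update_of_ne (hne x hx) _ _
      refine ⟨Function.update τ v n, n + 1, ?_, ?_, ?_⟩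
      · rintro x (rfl | hx) y (rfl | hy) hxy
        · rfl
        · rw [hτ y hy, Function.update_self] at hxy
          exact absurd hxy (hlt y hy).ne'
        · rw [hτ x hx, Function.update_self] at hxy
          exact absurd hxy (hlt x hx).ne
        · rw [hτ x hx, hτ y hy] at hxy
          exact hinj hx hy hxy
      · rintro x (rfl | hx)
        · simp
        · rw [hτ x hx]; exact (hlt x hx).trans (Nat.lt_succ_self n)
      · intro t
        by_cases ht : n < t
        · refine ⟨_, run.tail (LCWStep.intro C v hv c), .refl, ?_⟩
          ext x
          constructor
          · rintro (rfl | hx)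
            · exact ⟨Or.inl rfl, by simpa using ht⟩
            · exact ⟨Or.inr hx, by rw [hτ x hx]; exact (hlt x hx).trans ht⟩
          · exact fun h => h.1
        · obtain ⟨D, r1, r2, hDv⟩ := hD t
          refine ⟨D, r1, r2.tail (LCWStep.intro C v hv c), ?_⟩
          rw [hDv]
          ext x
          constructor
          · rintro ⟨hx, h⟩
            exact ⟨Or.inr hx, by rw [hτ x hx]; exact h⟩
          · rintro ⟨rfl | hx, h⟩
            · rw [Function.update_self] at h
              exact absurd h ht
            · exact ⟨hx, by rwa [hτ x hx] at h⟩
    | join i j hij => exact same rfl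
    | relabel i j hij => exact same rfl

/-- If `G` has many traces and `H` distinguishes any two vertices that `G` distinguishes (as for
`H = G` and `H = Gᶜ`), then `H` needs many labels: otherwise, at the critical cut, two
vertices with distinct traces would carry the same label. -/
lemma ManyTraces.not_lcwLE {V : Type} {G H : SimpleGraph V} {k m : ℕ} (h : ManyTraces G m)
    (hk : k < m) (hGH : ∀ x y z, x ≠ z → y ≠ z → (H.Adj x z ↔ H.Adj y z) →
      (G.Adj x z ↔ G.Adj y z)) : ¬ lcwLE H k := by
  rintro ⟨ℓ₀, ℓ, run⟩
  obtain ⟨τ, n, hinj, -, hD⟩ := LCWStep.exists_order rfl run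
  obtain ⟨t, f, h1, -, h3⟩ := h τ (Set.injOn_univ.1 hinj)
  obtain ⟨D, r1, r2, hv⟩ := hD t
  obtain ⟨i, j, hij, hl⟩ := Fintype.exists_ne_map_eq_of_card_lt (fun i => D.lab (f i))
    (by simpa using hk)
  obtain ⟨z, hz, hdiff⟩ := h3 i j hij
  have mem : ∀ i, f i ∈ D.verts := fun i => by rw [hv]; exact ⟨trivial, h1 i⟩
  have hzD : z ∉ D.verts := by rw [hv]; exact fun h => absurd h.2 (not_lt.2 hz)
  refine hdiff (hGH _ _ _ (fun e => hzD (e ▸ mem i)) (fun e => hzD (e ▸ mem j)) ?_)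
  exact (LCWStep.indist r2 (z := z) (mem i) (mem j) hl
    (iff_of_false (fun e => hzD (LCWStep.adj_mem r1 e)) fun e => hzD (LCWStep.adj_mem r1 e))).2.2.2

lemma exists_fin_isQT_manyTraces (k : ℕ) :
    ∃ (n : ℕ) (G : SimpleGraph (Fin n)), IsQT G ∧ ManyTraces G (k + 1) := by
  obtain ⟨V, _, G, hQ, hM⟩ := exists_isQT_manyTraces k
  let e := SimpleGraph.Iso.map (Finite.equivFin V) G
  exact ⟨_, _, hQ.iso ⟨e⟩, hM.iso e⟩

/-- A hereditary class of cographs has bounded linear clique-width if and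
only if it contains neither all quasi-threshold graphs nor the complements of all
quasi-threshold graphs. -/
theorem hereditary_cograph_bddLcw_iff (C : ∀ n : ℕ, Set (SimpleGraph (Fin n)))
    (hC : Hereditary C)
    (hcograph : ∀ n : ℕ, ∀ G ∈ C n, ¬ Nonempty (SimpleGraph.pathGraph 4 ↪g G)) :
    (∃ k : ℕ, ∀ n : ℕ, ∀ G ∈ C n, lcw G ≤ k) ↔
      (¬ (∀ (n : ℕ) (G : SimpleGraph (Fin n)), IsQT G → G ∈ C n) ∧
        ¬ (∀ (n : ℕ) (G : SimpleGraph (Fin n)), IsQT Gᶜ → G ∈ C n)) := by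
  constructor
  · rintro ⟨k, hk⟩
    obtain ⟨n, G, hQ, hM⟩ := exists_fin_isQT_manyTraces k
    constructor
    · intro hall
      have hG := hall n G hQ
      exact hM.not_lcwLE (Nat.lt_succ_of_le (hk n G hG)) (fun _ _ _ _ _ h => h)
        (p4Free_of_no_embedding (hcograph n G hG)).lcwLE_lcw
    · intro hall
      have hG := hall n Gᶜ (by rwa [compl_compl])
      refine hM.not_lcwLE (Nat.lt_succ_of_le (hk n _ hG)) ?_
        (p4Free_of_no_embedding (hcograph n _ hG)).lcwLE_lcw
      intro x y z hx hy h
      simp only [SimpleGraph.compl_adj, hx, hy, ne_eq, not_false_eq_true, true_and] at h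
      exact not_iff_not.1 h
  · rintro ⟨h1, h2⟩
    push Not at h1 h2
    obtain ⟨n₁, G₁, hQ₁, hG₁⟩ := h1
    obtain ⟨n₂, G₂, hQ₂, hG₂⟩ := h2
    obtain ⟨s, ⟨f⟩⟩ := hQ₁.exists_embedding
    obtain ⟨t, ⟨g⟩⟩ := hQ₂.exists_embedding
    refine ⟨2 * (s + t) + 1, fun n G hG =>
      (p4Free_of_no_embedding (hcograph n G hG)).lcw_le ?_ ?_⟩
    · rintro ⟨e⟩
      exact hG₁ (hC G₁ G ⟨e.comp f⟩ hG)
    · rintro ⟨e⟩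
      have := nonempty_complEmb (e.comp g)
      rw [compl_compl, compl_compl] at this
      exact hG₂ (hC G₂ G this hG)
end

section
/- For every co-quasi-threshold graph G there exists s ≥ 1 such that G is isomorphic to an induced subgraph of the graph Q̄_s. -/
/-!
Passing to complements, it suffices to embed every quasi-threshold graph in some `Q_{n+1}`, here
`QGraph n`. This is a structural induction: `QGraph (n + 1) = (K₁ ∗ QGraph n) ⊎ QGraph n` contains
`K₁ ∗ QGraph n`, which handles joins with `K₁`, and it contains two non-adjacent copies of
`QGraph n`, which handles disjoint unions once both parts are embedded at a common level. The
latter is possible because `QGraph m` embeds in `QGraph n` whenever `m ≤ n`.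
-/

open scoped Classical

/-- The join of two induced-subgraph embeddings. -/
def embJoin {V V' W W' : Type} {G : SimpleGraph V} {G' : SimpleGraph V'} {H : SimpleGraph W}
    {H' : SimpleGraph W'} (f : G ↪g H) (f' : G' ↪g H') : GJoin G G' ↪g GJoin H H' :=
  SimpleGraph.Embedding.complEquiv (SimpleGraph.Embedding.sum
    (SimpleGraph.Embedding.complEquiv f) (SimpleGraph.Embedding.complEquiv f'))

/-- The right-hand part of a join is an induced subgraph of the join. -/
def embJoinRight {V W : Type} (G : SimpleGraph V) (H : SimpleGraph W) : H ↪g GJoin G H where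
  toEmbedding := Function.Embedding.inr
  map_rel_iff' := (SimpleGraph.Embedding.complEquiv
    (SimpleGraph.Embedding.sumInr (G := Gᶜ) (H := Hᶜ))).map_rel_iff'.trans (by rw [compl_compl])

theorem QGraph_embeds_of_le {m n : ℕ} (h : m ≤ n) : Nonempty (QGraph m ↪g QGraph n) := by
  induction n, h using Nat.le_induction with
  | base => exact ⟨SimpleGraph.Embedding.refl⟩
  | succ n _ ih =>
    obtain ⟨f⟩ := ih
    exact ⟨SimpleGraph.Embedding.sumInr.comp f⟩

theorem IsQT.embeds_in_QGraph {V : Type} {G : SimpleGraph V} (hG : IsQT G) :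
    ∃ n : ℕ, Nonempty (G ↪g QGraph n) := by
  induction hG with
  | single => exact ⟨0, ⟨SimpleGraph.Embedding.refl⟩⟩
  | joinK1 _ ih =>
    obtain ⟨n, ⟨f⟩⟩ := ih
    exact ⟨n + 1, ⟨SimpleGraph.Embedding.sumInl.comp (embJoin SimpleGraph.Embedding.refl f)⟩⟩
  | union _ _ ih₁ ih₂ =>
    obtain ⟨m, ⟨f⟩⟩ := ih₁
    obtain ⟨n, ⟨g⟩⟩ := ih₂
    obtain ⟨a⟩ := QGraph_embeds_of_le (le_max_left m n)
    obtain ⟨b⟩ := QGraph_embeds_of_le (le_max_right m n)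
    exact ⟨max m n + 1,
      ⟨SimpleGraph.Embedding.sum ((embJoinRight _ _).comp (a.comp f)) (b.comp g)⟩⟩
  | iso _ e ih =>
    obtain ⟨n, ⟨f⟩⟩ := ih
    obtain ⟨e⟩ := e
    exact ⟨n, ⟨f.comp e.symm.toEmbedding⟩⟩

/-- Every co-quasi-threshold graph is an induced subgraph of some graph
`Q̄_s` (here `(QGraph (s - 1))ᶜ` is `Q̄_s`). -/
theorem coQT_embeds_in_universal {V : Type} (G : SimpleGraph V) (hG : IsQT Gᶜ) :
    ∃ s : ℕ, 1 ≤ s ∧ Nonempty (G ↪g (QGraph (s - 1))ᶜ) := by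
  obtain ⟨n, ⟨f⟩⟩ := hG.embeds_in_QGraph
  refine ⟨n + 1, by omega, ⟨?_⟩⟩
  have g := SimpleGraph.Embedding.complEquiv f
  rw [compl_compl] at g
  exact g
end
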